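/- arXiv:1805.07817 — 4 statements merged into one kernel-verified Lean document; each statement's English description precedes it below -/
import Mathlib

section
/- A ternary groupoid (A,[ ]) is a knot-theoretic ternary group if and only if it is entropic and there exists a unary operation x ↦ x̄ on A such that [abb] = ā and [āax] = [xaā] = x for all a,b,x ∈ A. -/
variable {A : Type*}

/-- Associativity of a ternary operation. -/
def TernaryAssoc (f : A → A → A → A) : Prop :=
  ∀ a b c d e : A,
    f (f a b c) d e = f a (f b c d) e ∧ f a (f b c d) e = f a b (f c d e)

/-- Ternary quasigroup: unique solvability in each coordinate. -/
def TernaryQuasigroup (f : A → A → A → A) : Prop :=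
  (∀ a b c : A, ∃! z : A, f z a b = c) ∧
  (∀ a b c : A, ∃! z : A, f a z b = c) ∧
  (∀ a b c : A, ∃! z : A, f a b z = c)

/-- A ternary group is an associative ternary quasigroup. -/
def TernaryGroup (f : A → A → A → A) : Prop :=
  TernaryAssoc f ∧ TernaryQuasigroup f

/-- The axiom (A3L). -/
def A3L (f : A → A → A → A) : Prop :=
  ∀ a b c d : A, f (f a b c) c d = f (f a b (f b c d)) (f b c d) d

/-- The axiom (A3R). -/
def A3R (f : A → A → A → A) : Prop :=
  ∀ a b c d : A, f a b (f b c d) = f a (f a b c) (f (f a b c) c d)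

/-- Semi-commutativity: [abc] = [cba]. -/
def SemiComm (f : A → A → A → A) : Prop :=
  ∀ a b c : A, f a b c = f c b a

/-- A knot-theoretic ternary group. -/
def KnotTheoretic (f : A → A → A → A) : Prop :=
  TernaryGroup f ∧ A3L f ∧ A3R f

/-- `sk` is a skew-element operation: [a (sk a) a] = a. -/
def IsSkew (f : A → A → A → A) (sk : A → A) : Prop :=
  ∀ a : A, f a (sk a) a = a

/-- Entropic (medial) ternary operation. -/
def Entropic (f : A → A → A → A) : Prop :=
  ∀ a₁ a₂ a₃ b₁ b₂ b₃ c₁ c₂ c₃ : A,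
    f (f a₁ a₂ a₃) (f b₁ b₂ b₃) (f c₁ c₂ c₃) = f (f a₁ b₁ c₁) (f a₂ b₂ c₂) (f a₃ b₃ c₃)

/-!
In a ternary group, (A3L) says exactly that `[bba]` does not depend on `b`; its value is then the
skew element of `a`. This forces semi-commutativity, and in an associative semi-commutative
operation the entries of a long product may be permuted within the odd and within the even
positions. Transposing a `3 × 3` array read row by row preserves these parities, which gives
entropicity. Semi-commutativity also exchanges (A3L) and (A3R).

Conversely, the laws for `x ↦ x̄` make it possible to fill a `3 × 3` array so that the entropic law
for that array is semi-commutativity or either half of associativity; the inverses of the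
translations are then explicit.
-/

section

variable {f : A → A → A → A} {sk : A → A}

theorem TernaryAssoc.left_eq_right (hf : TernaryAssoc f) (a b c d e : A) :
    f (f a b c) d e = f a b (f c d e) :=
  (hf a b c d e).1.trans (hf a b c d e).2

theorem TernaryAssoc.mid_eq_right (hf : TernaryAssoc f) (a b c d e : A) :
    f a (f b c d) e = f a b (f c d e) :=
  (hf a b c d e).2

theorem TernaryAssoc.swap_one_three (hf : TernaryAssoc f) (hc : SemiComm f) (a b c d e : A) :
    f a b (f c d e) = f c b (f a d e) := by
  rw [← hf.left_eq_right, hc a b c, hf.left_eq_right]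

theorem TernaryAssoc.swap_two_four (hf : TernaryAssoc f) (hc : SemiComm f) (a b c d e : A) :
    f a b (f c d e) = f a d (f c b e) := by
  rw [← hf.mid_eq_right, hc b c d, hf.mid_eq_right]

theorem TernaryAssoc.entropic (hf : TernaryAssoc f) (hc : SemiComm f) : Entropic f := by
  intro a₁ a₂ a₃ b₁ b₂ b₃ c₁ c₂ c₃
  simp only [hf.left_eq_right, hf.mid_eq_right]
  calc f a₁ a₂ (f a₃ b₁ (f b₂ b₃ (f c₁ c₂ c₃)))
      = f a₁ b₁ (f a₃ a₂ (f b₂ c₂ (f c₁ b₃ c₃))) := by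
        rw [hf.swap_two_four hc a₁ a₂ a₃ b₁, hf.swap_two_four hc b₂ b₃ c₁ c₂]
    _ = f a₁ b₁ (f c₁ a₂ (f b₂ c₂ (f a₃ b₃ c₃))) := by
        rw [hf.swap_one_three hc b₂ c₂ c₁ b₃, hf.swap_one_three hc a₃ a₂ c₁ c₂,
          hf.swap_one_three hc a₃ c₂ b₂ b₃]

theorem A3L.a3R (hL : A3L f) (hc : SemiComm f) : A3R f := by
  intro a b c d
  calc f a b (f b c d)
      = f (f d c b) b a := by rw [hc a, hc b]
    _ = f (f d c (f c b a)) (f c b a) a := hL d c b a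
    _ = f a (f a b c) (f (f a b c) c d) := by rw [hc _ _ a, hc d, hc c]

theorem TernaryQuasigroup.left_cancel (hf : TernaryQuasigroup f) {a b x y : A}
    (h : f a b x = f a b y) : x = y :=
  (hf.2.2 a b _).unique h rfl

theorem TernaryQuasigroup.right_cancel (hf : TernaryQuasigroup f) {a b x y : A}
    (h : f x a b = f y a b) : x = y :=
  (hf.1 a b _).unique h rfl

theorem TernaryQuasigroup.exists_isSkew (hf : TernaryQuasigroup f) : ∃ sk, IsSkew f sk :=
  Classical.skolem.1 fun a => (hf.2.1 a a a).exists

theorem IsSkew.op_skew_self (hsk : IsSkew f sk) (hf : TernaryGroup f) (a x : A) :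
    f x (sk a) a = x := by
  obtain ⟨z, rfl⟩ := (hf.2.1 a a x).exists
  rw [hf.1.left_eq_right, hsk]

theorem IsSkew.op_self_skew (hsk : IsSkew f sk) (hf : TernaryGroup f) (a x : A) :
    f x a (sk a) = x := by
  apply hf.2.right_cancel (a := a) (b := a)
  rw [hf.1.left_eq_right, ← hf.1.mid_eq_right, hsk]

theorem TernaryGroup.a3L_iff (hf : TernaryGroup f) :
    A3L f ↔ ∀ a b c, f b b a = f c c a := by
  refine ⟨fun hL a b c => ?_, fun h a b c d => ?_⟩
  · obtain ⟨z, rfl⟩ := (hf.2.1 b a c).exists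
    apply hf.2.left_cancel (a := a) (b := z)
    rw [← hf.1.left_eq_right, hL, hf.1.left_eq_right]
  · rw [hf.1.left_eq_right, hf.1.left_eq_right, h d c]

theorem A3L.self_self_op (hL : A3L f) (hf : TernaryGroup f) (hsk : IsSkew f sk) (a b : A) :
    f b b a = sk a :=
  calc f b b a = f (sk a) (sk a) a := hf.a3L_iff.1 hL a b (sk a)
    _ = sk a := hsk.op_skew_self hf a (sk a)

theorem A3L.semiComm (hL : A3L f) (hf : TernaryGroup f) : SemiComm f := by
  obtain ⟨sk, hsk⟩ := hf.2.exists_isSkew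
  intro a b c
  apply hf.2.right_cancel (a := f c b a) (b := c)
  calc f (f a b c) (f c b a) c
      = f a b (f (f c c b) a c) := by rw [hf.1.left_eq_right, (hf.1 c c b a c).1]
    _ = f (f a b (sk b)) a c := by rw [hL.self_self_op hf hsk, hf.1.left_eq_right]
    _ = f a a c := by rw [hsk.op_self_skew hf]
    _ = f (f c b a) (f c b a) c := hf.a3L_iff.1 hL _ _ _

/-- The laws `[abb] = ā`, `[āax] = x` and `[xaā] = x` on a unary operation `a ↦ ā`, written `sk`,
which single out the knot-theoretic ternary groups among the entropic ternary groupoids. -/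
structure SkewLaws (f : A → A → A → A) (sk : A → A) : Prop where
  op_self_self : ∀ a b, f a b b = sk a
  skew_self_op : ∀ a x, f (sk a) a x = x
  op_self_skew : ∀ a x, f x a (sk a) = x

theorem A3L.skewLaws (hL : A3L f) (hf : TernaryGroup f) (hsk : IsSkew f sk) : SkewLaws f sk where
  op_self_self a b := by rw [hL.semiComm hf, hL.self_self_op hf hsk]
  skew_self_op a x := by rw [hL.semiComm hf, hsk.op_self_skew hf]
  op_self_skew := hsk.op_self_skew hf

namespace SkewLaws

theorem skew_skew (h : SkewLaws f sk) (a : A) : sk (sk a) = a := by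
  rw [← h.op_self_self (sk a) a, h.skew_self_op]

theorem skew_op_self_self (h : SkewLaws f sk) (a b : A) : f (sk a) b b = a := by
  rw [h.op_self_self, h.skew_skew]

theorem self_skew_op (h : SkewLaws f sk) (a x : A) : f a (sk a) x = x := by
  simpa only [h.skew_skew] using h.skew_self_op (sk a) x

theorem op_skew_self (h : SkewLaws f sk) (a x : A) : f x (sk a) a = x := by
  simpa only [h.skew_skew] using h.op_self_skew (sk a) x

theorem self_self_op (h : SkewLaws f sk) (hE : Entropic f) (a b : A) : f b b a = sk a :=
  calc f b b a
      = f (f b b (sk b)) (f (sk b) b b) (f (sk a) b b) := by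
        simp only [h.op_self_skew, h.skew_op_self_self]
    _ = f (f b (sk b) (sk a)) (f b b b) (f (sk b) b b) := hE ..
    _ = sk a := by
        rw [h.self_skew_op, h.op_self_self b, h.skew_op_self_self, h.op_skew_self]

theorem self_self_op_skew (h : SkewLaws f sk) (hE : Entropic f) (a b : A) :
    f b b (sk a) = a := by
  rw [h.self_self_op hE, h.skew_skew]

theorem semiComm (h : SkewLaws f sk) (hE : Entropic f) : SemiComm f := fun a b c =>
  calc f a b c
      = f (f b b (sk a)) (f b (sk b) b) (f (sk c) b b) := by
        rw [h.self_self_op_skew hE, h.self_skew_op, h.skew_op_self_self]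
    _ = f (f b b (sk c)) (f b (sk b) b) (f (sk a) b b) := hE ..
    _ = f c b a := by
        rw [h.self_self_op_skew hE, h.self_skew_op, h.skew_op_self_self]

theorem left_eq_right (h : SkewLaws f sk) (hE : Entropic f) (a b c d e : A) :
    f (f a b c) d e = f a b (f c d e) :=
  calc f (f a b c) d e
      = f (f a b c) (f a (sk a) d) (f (sk a) a e) := by rw [h.self_skew_op, h.skew_self_op]
    _ = f (f a a (sk a)) (f b (sk a) a) (f c d e) := hE ..
    _ = f a b (f c d e) := by rw [h.op_self_skew, h.op_skew_self]

theorem mid_eq_right (h : SkewLaws f sk) (hE : Entropic f) (a b c d e : A) :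
    f a (f b c d) e = f a b (f c d e) :=
  calc f a (f b c d) e
      = f (f (sk a) c c) (f b c d) (f b (sk b) e) := by
        rw [h.skew_op_self_self, h.self_skew_op]
    _ = f (f (sk a) b b) (f c c (sk b)) (f c d e) := hE ..
    _ = f a b (f c d e) := by rw [h.skew_op_self_self, h.self_self_op_skew hE]

theorem ternaryAssoc (h : SkewLaws f sk) (hE : Entropic f) : TernaryAssoc f := fun a b c d e =>
  ⟨(h.left_eq_right hE a b c d e).trans (h.mid_eq_right hE a b c d e).symm,
    h.mid_eq_right hE a b c d e⟩

theorem op_op_swap (h : SkewLaws f sk) (hE : Entropic f) (a b x : A) :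
    f a b (f b a x) = x := by
  rw [← h.left_eq_right hE, h.op_self_self, h.skew_self_op]

theorem op_mid_op_mid (h : SkewLaws f sk) (hE : Entropic f) (a b x : A) :
    f a (f a x b) b = x := by
  rw [h.mid_eq_right hE, h.op_self_self, h.self_self_op_skew hE]

theorem ternaryQuasigroup (h : SkewLaws f sk) (hE : Entropic f) : TernaryQuasigroup f := by
  have solve_right (a b c : A) : ∃! z, f a b z = c :=
    (Function.bijective_iff_has_inverse.2
      ⟨f b a, h.op_op_swap hE b a, h.op_op_swap hE a b⟩).existsUnique c
  have solve_left (a b c : A) : ∃! z, f z a b = c := by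
    simpa only [h.semiComm hE b a] using solve_right b a c
  have mid_involutive (a b : A) : Function.Involutive fun z => f a z b := h.op_mid_op_mid hE a b
  exact ⟨solve_left, fun a b => (mid_involutive a b).bijective.existsUnique, solve_right⟩

theorem ternaryGroup (h : SkewLaws f sk) (hE : Entropic f) : TernaryGroup f :=
  ⟨h.ternaryAssoc hE, h.ternaryQuasigroup hE⟩

theorem a3L (h : SkewLaws f sk) (hE : Entropic f) : A3L f :=
  (h.ternaryGroup hE).a3L_iff.2 fun a b c => by rw [h.self_self_op hE, h.self_self_op hE]

end SkewLaws

theorem knotTheoretic_iff (f : A → A → A → A) :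
    KnotTheoretic f ↔ TernaryGroup f ∧ A3L f :=
  ⟨fun ⟨hf, hL, _⟩ => ⟨hf, hL⟩, fun ⟨hf, hL⟩ => ⟨hf, hL, hL.a3R (hL.semiComm hf)⟩⟩

theorem stmt4_general (f : A → A → A → A) :
    TernaryGroup f ∧ A3L f ↔
    (Entropic f ∧
     ∃ sk : A → A, (∀ a b : A, f a b b = sk a) ∧
       ∀ a x : A, f (sk a) a x = x ∧ f x a (sk a) = x) := by
  constructor
  · rintro ⟨hf, hL⟩
    obtain ⟨sk, hsk⟩ := hf.2.exists_isSkew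
    have h : SkewLaws f sk := hL.skewLaws hf hsk
    exact ⟨hf.1.entropic (hL.semiComm hf), sk, h.op_self_self,
      fun a x => ⟨h.skew_self_op a x, h.op_self_skew a x⟩⟩
  · rintro ⟨hE, sk, hself, hskew⟩
    have h : SkewLaws f sk := ⟨hself, fun a x => (hskew a x).1, fun a x => (hskew a x).2⟩
    exact ⟨h.ternaryGroup hE, h.a3L hE⟩

end

/-- A ternary groupoid is a knot-theoretic ternary group iff it is
entropic and there is a unary operation x ↦ x̄ with [abb] = ā and [āax] = [xaā] = x. -/
theorem stmt4 (f : A → A → A → A) :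
    KnotTheoretic f ↔
    (Entropic f ∧
     ∃ sk : A → A, (∀ a b : A, f a b b = sk a) ∧
       ∀ a x : A, f (sk a) a x = x ∧ f x a (sk a) = x) := by
  exact (knotTheoretic_iff f).trans (stmt4_general f)
end

section
/- A ternary groupoid (A,[ ]) is a knot-theoretic ternary group if and only if it is semi-commutative, satisfies (A3L) and the condition (a2): [a[bcd]e]=[a[bed]c] for all a,b,c,d,e ∈ A, and there exists an involutive unary operation x ↦ x̄ on A (i.e., x̄̄ = x for all x) such that [aāx] = x for all a,x ∈ A. -/
variable {A : Type*}

/-!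
Read `[abc]` as a product `abc` in a covering group. Choosing `b` with `[bcd] = y` and cancelling
`ab` turns (A3L) into `ccd = yyd`: all squares of elements of `A` equal one element `ε`, and
`ε² = 1`. Hence `(cba)(abc) = cb(aa)bc = ε³ = ε = (abc)(abc)`, which is semi-commutativity. Under
semi-commutativity (A3R) is (A3L) read backwards, and (a2) is associativity with the last three
entries reversed.

Conversely, (a2) and `[aāx] = x` give `[a[bcd]b̄] = [adc]`. This rule with `e`, then with `ē`, in
place of `b` proves `[a[bcd]e] = [ab[cde]]`, and inserting skew elements solves the equations.
-/

/-- The condition (a2): the third and fifth letters of `[a[bcd]e]` may be exchanged. -/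
def A2 (f : A → A → A → A) : Prop :=
  ∀ a b c d e : A, f a (f b c d) e = f a (f b e d) c

/-- The Dörnte identities: an element next to its skew element cancels, in either order and on
either side. They play the role of the inverse laws of a binary group. -/
structure DornteIdentities (f : A → A → A → A) (sk : A → A) : Prop where
  self_skew_left : ∀ a x : A, f a (sk a) x = x
  skew_self_left : ∀ a x : A, f (sk a) a x = x
  self_skew_right : ∀ a x : A, f x a (sk a) = x
  skew_self_right : ∀ a x : A, f x (sk a) a = x

section

variable {f : A → A → A → A} {sk : A → A}

namespace TernaryQuasigroup

theorem left_cancel_s6 (hq : TernaryQuasigroup f) {a b x y : A} (h : f x a b = f y a b) : x = y :=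
  (hq.1 a b (f y a b)).unique h rfl

theorem middle_cancel (hq : TernaryQuasigroup f) {a b x y : A} (h : f a x b = f a y b) : x = y :=
  (hq.2.1 a b (f a y b)).unique h rfl

theorem right_cancel_s6 (hq : TernaryQuasigroup f) {a b x y : A} (h : f a b x = f a b y) : x = y :=
  (hq.2.2 a b (f a b y)).unique h rfl

theorem exists_isSkew_s6 (hq : TernaryQuasigroup f) : ∃ sk : A → A, IsSkew f sk := by
  choose sk hsk _ using fun a => hq.2.1 a a a
  exact ⟨sk, hsk⟩

end TernaryQuasigroup

namespace TernaryAssoc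

theorem left_eq_middle (ha : TernaryAssoc f) (a b c d e : A) :
    f (f a b c) d e = f a (f b c d) e :=
  (ha a b c d e).1

theorem middle_eq_right (ha : TernaryAssoc f) (a b c d e : A) :
    f a (f b c d) e = f a b (f c d e) :=
  (ha a b c d e).2

theorem left_eq_right_s6 (ha : TernaryAssoc f) (a b c d e : A) :
    f (f a b c) d e = f a b (f c d e) :=
  (ha.left_eq_middle a b c d e).trans (ha.middle_eq_right a b c d e)

end TernaryAssoc

theorem TernaryGroup.dornteIdentities (hg : TernaryGroup f) (hsk : IsSkew f sk) :
    DornteIdentities f sk where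
  self_skew_left a x := by
    obtain ⟨v, rfl, -⟩ := hg.2.2.2 a a x
    rw [← hg.1.left_eq_right_s6, hsk]
  skew_self_left a x := by
    apply hg.2.middle_cancel (a := a) (b := a)
    rw [← hg.1.left_eq_middle, hsk]
  self_skew_right a x := by
    apply hg.2.middle_cancel (a := a) (b := a)
    rw [hg.1.middle_eq_right, hsk]
  skew_self_right a x := by
    obtain ⟨v, rfl, -⟩ := hg.2.1 a a x
    rw [hg.1.left_eq_right_s6, hsk]

namespace DornteIdentities

theorem involutive (hd : DornteIdentities f sk) : Function.Involutive sk := fun x =>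
  calc sk (sk x) = f x (sk x) (sk (sk x)) := (hd.self_skew_left x _).symm
    _ = x := hd.self_skew_right (sk x) x

theorem ternaryQuasigroup (hd : DornteIdentities f sk) (ha : TernaryAssoc f) :
    TernaryQuasigroup f := by
  refine ⟨fun a b c => ⟨f c (sk b) (sk a), ?_, ?_⟩, fun a b c => ⟨f (sk a) c (sk b), ?_, ?_⟩,
    fun a b c => ⟨f (sk b) (sk a) c, ?_, ?_⟩⟩
  · simp only [ha.left_eq_right_s6, hd.skew_self_left, hd.skew_self_right]
  · rintro z rfl
    simp only [ha.left_eq_right_s6, hd.self_skew_left, hd.self_skew_right]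
  · simp only [← ha.left_eq_middle, hd.self_skew_left, hd.skew_self_right]
  · rintro z rfl
    simp only [← ha.left_eq_middle, hd.skew_self_left, hd.self_skew_right]
  · simp only [← ha.left_eq_right_s6, hd.self_skew_right, hd.self_skew_left]
  · rintro z rfl
    simp only [← ha.left_eq_right_s6, hd.skew_self_right, hd.skew_self_left]

end DornteIdentities

namespace A3L

theorem self_self_eq (hL : A3L f) (hg : TernaryGroup f) (c y d : A) : f c c d = f y y d := by
  obtain ⟨b, hb, -⟩ := hg.2.1 c d y
  have h : f (f c b c) c d = f (f c b y) y d := by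
    simpa only [hb] using hL c b c d
  rw [hg.1.left_eq_right_s6, hg.1.left_eq_right_s6] at h
  exact hg.2.right_cancel_s6 h

theorem self_self_self_self (hL : A3L f) (hg : TernaryGroup f) (c d : A) :
    f c c (f c c d) = d := by
  have h : f c c (f c (f c c c) d) = f c c d := by
    rw [← hg.1.left_eq_right_s6]
    exact hL.self_self_eq hg (f c c c) c d
  simpa only [hg.1.middle_eq_right] using hg.2.right_cancel_s6 h

theorem semiComm_s6 (hL : A3L f) (hg : TernaryGroup f) : SemiComm f := by
  intro a b c
  have h : f (f a b c) (f a b c) a = f (f c b a) (f a b c) a :=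
    calc f (f a b c) (f a b c) a = f c c a := hL.self_self_eq hg _ _ _
      _ = f c (f b b (f b b c)) a := by rw [hL.self_self_self_self hg]
      _ = f c b (f b b (f b c a)) := by simp only [hg.1.middle_eq_right]
      _ = f c b (f a a (f b c a)) := by rw [hL.self_self_eq hg b a]
      _ = f (f c b a) (f a b c) a := by rw [hg.1.left_eq_right_s6, hg.1.middle_eq_right]
  exact hg.2.left_cancel_s6 h

end A3L

namespace SemiComm

theorem a2 (hs : SemiComm f) (ha : TernaryAssoc f) : A2 f := fun a b c d e =>
  calc f a (f b c d) e = f a b (f c d e) := ha.middle_eq_right a b c d e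
    _ = f a b (f e d c) := by rw [hs c d e]
    _ = f a (f b e d) c := (ha.middle_eq_right a b e d c).symm

theorem a3R (hs : SemiComm f) (hL : A3L f) : A3R f := fun a b c d =>
  calc f a b (f b c d) = f (f d c b) b a := by rw [hs a, hs b c d]
    _ = f (f d c (f c b a)) (f c b a) a := hL d c b a
    _ = f a (f a b c) (f (f a b c) c d) := by rw [hs _ _ a, hs c b a, hs d]

theorem dornteIdentities (hs : SemiComm f) (hinv : Function.Involutive sk)
    (hsk : ∀ a x : A, f a (sk a) x = x) : DornteIdentities f sk := by
  have skew_self_left (a x : A) : f (sk a) a x = x := by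
    simpa only [hinv a] using hsk (sk a) x
  exact
    { self_skew_left := hsk
      skew_self_left := skew_self_left
      self_skew_right := fun a x => (hs _ _ _).trans (skew_self_left a x)
      skew_self_right := fun a x => (hs _ _ _).trans (hsk a x) }

theorem ternaryAssoc_of_middle_eq_right (hs : SemiComm f)
    (h : ∀ a b c d e : A, f a (f b c d) e = f a b (f c d e)) : TernaryAssoc f := by
  refine fun a b c d e => ⟨?_, h a b c d e⟩
  calc f (f a b c) d e = f e d (f c b a) := by rw [hs _ d e, hs a b c]
    _ = f e (f d c b) a := (h e d c b a).symm
    _ = f a (f b c d) e := by rw [hs e, hs d c b]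

end SemiComm

namespace A2

theorem middle_skew_right (h : A2 f) (hd : DornteIdentities f sk) (a b c d : A) :
    f a (f b c d) (sk b) = f a d c := by
  rw [h, hd.self_skew_left]

theorem middle_skew_left (h : A2 f) (hd : DornteIdentities f sk) (a b c d : A) :
    f a (f (sk b) c d) b = f a d c := by
  rw [h, hd.skew_self_left]

theorem ternaryAssoc (h : A2 f) (hs : SemiComm f) (hd : DornteIdentities f sk) :
    TernaryAssoc f :=
  hs.ternaryAssoc_of_middle_eq_right fun a b c d e =>
    calc f a (f b c d) e = f a (f b (f e d c) (sk e)) e := by rw [h.middle_skew_right hd]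
      _ = f a (f (sk e) (f c d e) b) e := by rw [hs b, hs e d c]
      _ = f a b (f c d e) := h.middle_skew_left hd a e _ b

end A2

end

/-- A ternary groupoid is a knot-theoretic ternary group iff it is
semi-commutative, satisfies (A3L) and (a2), and there is an involutive unary operation
x ↦ x̄ with [aāx] = x. -/
theorem stmt6 (f : A → A → A → A) :
    KnotTheoretic f ↔
    (SemiComm f ∧ A3L f ∧
     (∀ a b c d e : A, f a (f b c d) e = f a (f b e d) c) ∧
     ∃ sk : A → A, (∀ x : A, sk (sk x) = x) ∧ ∀ a x : A, f a (sk a) x = x) := by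
  constructor
  · rintro ⟨hg, hL, -⟩
    have hs : SemiComm f := hL.semiComm_s6 hg
    obtain ⟨sk, hsk⟩ := hg.2.exists_isSkew_s6
    have hd : DornteIdentities f sk := hg.dornteIdentities hsk
    exact ⟨hs, hL, hs.a2 hg.1, sk, hd.involutive, hd.self_skew_left⟩
  · rintro ⟨hs, hL, ha2, sk, hinv, hsk⟩
    have hd : DornteIdentities f sk := hs.dornteIdentities hinv hsk
    have ha : TernaryAssoc f := A2.ternaryAssoc ha2 hs hd
    exact ⟨⟨ha, hd.ternaryQuasigroup ha⟩, hL, hs.a3R hL⟩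
end

section
/- Let (A,[ ]) be a ternary group, with ā denoting the skew element of a. Then the following two conditions are equivalent: (i) [abb] = ā = [bba] for all a,b ∈ A; (ii) [ābc] = [ab̄c] = [abc̄] for all a,b,c ∈ A. -/
variable {A : Type*}

/-!
By associativity and solvability, the identity `[a ā a] = a` spreads to the Dörnte identities
`[a ā x] = [ā a x] = [x ā a] = x`, and taking skew elements is an involution. Condition (i) lets a
bar be written as a pair of equal letters, so `[ā b c]` and `[a b̄ c]` are both `[a b b b c]`.
Conversely, writing `a` as the skew element of `ā` and moving its outer bar onto `b` turns
`[a b b]` into `[ā b̄ b]`, which collapses to `ā`. The equalities involving `[a b c̄]` are the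
mirror images.
-/

section Skew

open Function

variable {f : A → A → A → A} {sk : A → A}

namespace TernaryQuasigroup

theorem bijective_left (hf : TernaryQuasigroup f) (a b : A) : Bijective fun z ↦ f z a b :=
  (bijective_iff_existsUnique _).2 (hf.1 a b)

theorem bijective_middle (hf : TernaryQuasigroup f) (a b : A) : Bijective fun z ↦ f a z b :=
  (bijective_iff_existsUnique _).2 (hf.2.1 a b)

theorem bijective_right (hf : TernaryQuasigroup f) (a b : A) : Bijective fun z ↦ f a b z :=
  (bijective_iff_existsUnique _).2 (hf.2.2 a b)

end TernaryQuasigroup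

namespace TernaryAssoc

theorem self_skew_cancel_left (hf : TernaryAssoc f) {a s : A} (hs : f a s a = a)
    (hsurj : Surjective fun z ↦ f a a z) (x : A) : f a s x = x := by
  obtain ⟨y, rfl⟩ := hsurj x
  calc f a s (f a a y) = f a (f s a a) y := (hf a s a a y).2.symm
    _ = f (f a s a) a y := (hf a s a a y).1.symm
    _ = f a a y := by rw [hs]

theorem skew_self_cancel_right (hf : TernaryAssoc f) {a s : A} (hs : f a s a = a)
    (hsurj : Surjective fun z ↦ f z a a) (x : A) : f x s a = x := by
  obtain ⟨y, rfl⟩ := hsurj x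
  calc f (f y a a) s a = f y (f a a s) a := (hf y a a s a).1
    _ = f y a (f a s a) := (hf y a a s a).2
    _ = f y a a := by rw [hs]

theorem skew_self_cancel_left (hf : TernaryAssoc f) {a s x : A} (hs : f a s a = a)
    (hinj : Injective fun z ↦ f a z x) : f s a x = x :=
  hinj <| calc
    f a (f s a x) x = f (f a s a) x x := (hf a s a x x).1.symm
    _ = f a x x := by rw [hs]

theorem skew_involutive (hf : TernaryAssoc f) (hsk : IsSkew f sk)
    (hinj : ∀ a b, Injective fun z ↦ f a z b) : Involutive sk := fun a ↦
  hinj (sk a) (sk a) <| calc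
    f (sk a) (sk (sk a)) (sk a) = sk a := hsk (sk a)
    _ = f (sk a) a (sk a) := (hf.skew_self_cancel_left (hsk a) (hinj a (sk a))).symm

theorem skew_left_eq_skew_middle (hf : TernaryAssoc f) (h : ∀ a b, f a b b = sk a) (a b c : A) :
    f (sk a) b c = f a (sk b) c :=
  calc f (sk a) b c = f (f a b b) b c := by rw [h a b]
    _ = f a (f b b b) c := (hf a b b b c).1
    _ = f a (sk b) c := by rw [h b b]

theorem skew_middle_eq_skew_right (hf : TernaryAssoc f) (h : ∀ a b, f b b a = sk a) (a b c : A) :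
    f a (sk b) c = f a b (sk c) :=
  calc f a (sk b) c = f a (f b b b) c := by rw [h b b]
    _ = f a b (f b b c) := (hf a b b b c).2
    _ = f a b (sk c) := by rw [h c b]

end TernaryAssoc

namespace TernaryGroup

theorem skew_involutive (hf : TernaryGroup f) (hsk : IsSkew f sk) : Involutive sk :=
  hf.1.skew_involutive hsk fun a b ↦ (hf.2.bijective_middle a b).injective

theorem apply_self_right_eq_skew_iff (hf : TernaryGroup f) (hsk : IsSkew f sk) :
    (∀ a b, f a b b = sk a) ↔ ∀ a b c, f (sk a) b c = f a (sk b) c := by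
  refine ⟨hf.1.skew_left_eq_skew_middle, fun h a b ↦ ?_⟩
  calc f a b b = f (sk (sk a)) b b := by rw [hf.skew_involutive hsk a]
    _ = f (sk a) (sk b) b := h (sk a) b b
    _ = sk a := hf.1.skew_self_cancel_right (hsk b) (hf.2.bijective_left b b).surjective (sk a)

theorem apply_self_left_eq_skew_iff (hf : TernaryGroup f) (hsk : IsSkew f sk) :
    (∀ a b, f b b a = sk a) ↔ ∀ a b c, f a (sk b) c = f a b (sk c) := by
  refine ⟨hf.1.skew_middle_eq_skew_right, fun h a b ↦ ?_⟩
  calc f b b a = f b b (sk (sk a)) := by rw [hf.skew_involutive hsk a]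
    _ = f b (sk b) (sk a) := (h b b (sk a)).symm
    _ = sk a := hf.1.self_skew_cancel_left (hsk b) (hf.2.bijective_right b b).surjective (sk a)

end TernaryGroup

end Skew

/-- In a ternary group, [abb] = ā = [bba] for all a,b
iff [ābc] = [ab̄c] = [abc̄] for all a,b,c. -/
theorem stmt10 (f : A → A → A → A) (hG : TernaryGroup f)
    (sk : A → A) (hsk : IsSkew f sk) :
    (∀ a b : A, f a b b = sk a ∧ f b b a = sk a) ↔
    (∀ a b c : A, f (sk a) b c = f a (sk b) c ∧ f a (sk b) c = f a b (sk c)) := by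
  simp only [forall_and]
  exact and_congr (hG.apply_self_right_eq_skew_iff hsk) (hG.apply_self_left_eq_skew_iff hsk)
end

section
/- Let (A,[ ]) be a ternary group and define P(a,b,c) = [ab̄c], where b̄ denotes the skew element of b. Then (A,[ ]) is semi-commutative if and only if (A,P) is a ternary semigroup, i.e., P is associative: P(P(a,b,c),d,e) = P(a,P(b,c,d),e) = P(a,b,P(c,d,e)) for all a,b,c,d,e ∈ A. -/
variable {A : Type*}

/-!
For any map `φ`, associativity of `f` rewrites the two outer bracketings of
`P(a,b,c) = [a φ(b) c]` as `[a [φ(b) c φ(d)] e]`, while the middle one is `[a φ([b φ(c) d]) e]`.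
By cancellation, `P` is associative iff `φ([b φ(c) d]) = [φ(b) c φ(d)]`. The skew map is an
involutive anti-automorphism, like inversion in a group, so for it this identity says
`[d̄ c b̄] = [b̄ c d̄]`; since the skew map is onto, that is semi-commutativity.
-/

section

variable {f : A → A → A → A} {sk : A → A}

theorem TernaryAssoc.left_eq_middle_s13 (hA : TernaryAssoc f) (a b c d e : A) :
    f (f a b c) d e = f a (f b c d) e :=
  (hA a b c d e).1

theorem TernaryAssoc.middle_eq_right_s13 (hA : TernaryAssoc f) (a b c d e : A) :
    f a (f b c d) e = f a b (f c d e) :=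
  (hA a b c d e).2

theorem TernaryQuasigroup.middle_cancel_iff (hQ : TernaryQuasigroup f) {a b x y : A} :
    f a x b = f a y b ↔ x = y :=
  ⟨fun h => (hQ.2.1 a b (f a y b)).unique h rfl, congrArg (f a · b)⟩

theorem semiComm_iff_of_surjective {φ : A → A} (hφ : Function.Surjective φ) :
    SemiComm f ↔ ∀ a b c, f (φ a) b (φ c) = f (φ c) b (φ a) := by
  refine ⟨fun h a b c => h (φ a) b (φ c), fun h a b c => ?_⟩
  obtain ⟨x, rfl⟩ := hφ a
  obtain ⟨z, rfl⟩ := hφ c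
  exact h x b z

namespace IsSkew

theorem eq_of_apply_eq_self (hsk : IsSkew f sk) (hQ : TernaryQuasigroup f) {a x : A}
    (hx : f a x a = a) : sk a = x :=
  hQ.middle_cancel_iff.mp ((hsk a).trans hx.symm)

theorem self_skew_apply (hsk : IsSkew f sk) (hG : TernaryGroup f) (a x : A) :
    f a (sk a) x = x := by
  obtain ⟨hA, -, -, hright⟩ := hG
  obtain ⟨z, rfl, -⟩ := hright a a x
  calc
    f a (sk a) (f a a z) = f (f a (sk a) a) a z := by
      rw [hA.left_eq_middle_s13, hA.middle_eq_right_s13]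
    _ = f a a z := by rw [hsk]

theorem skew_self_apply (hsk : IsSkew f sk) (hG : TernaryGroup f) (a x : A) :
    f (sk a) a x = x := by
  obtain ⟨hA, hQ⟩ := hG
  have h : f a (f (sk a) a x) a = f a x a := by rw [← hA.left_eq_middle_s13, hsk]
  exact hQ.middle_cancel_iff.mp h

theorem apply_self_skew (hsk : IsSkew f sk) (hG : TernaryGroup f) (a x : A) :
    f x a (sk a) = x := by
  obtain ⟨hA, hQ⟩ := hG
  have h : f a (f x a (sk a)) a = f a x a := by rw [hA.middle_eq_right_s13, hsk]
  exact hQ.middle_cancel_iff.mp h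

theorem involutive (hsk : IsSkew f sk) (hG : TernaryGroup f) : Function.Involutive sk :=
  fun a => hsk.eq_of_apply_eq_self hG.2 (hsk.skew_self_apply hG a (sk a))

theorem skew_apply (hsk : IsSkew f sk) (hG : TernaryGroup f) (a b c : A) :
    sk (f a b c) = f (sk c) (sk b) (sk a) := by
  have hA := hG.1
  have cancel_word : f (f a b c) (sk c) (sk b) = a := by
    rw [hA.left_eq_middle_s13, hA.middle_eq_right_s13, hsk.self_skew_apply hG, hsk.apply_self_skew hG]
  apply hsk.eq_of_apply_eq_self hG.2
  calc
    f (f a b c) (f (sk c) (sk b) (sk a)) (f a b c)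
        = f (f (f a b c) (sk c) (sk b)) (sk a) (f a b c) := (hA.left_eq_middle_s13 ..).symm
    _ = f a (sk a) (f a b c) := by rw [cancel_word]
    _ = f a b c := hsk.self_skew_apply hG a _

end IsSkew

theorem TernaryGroup.assoc_middle_map_iff (hG : TernaryGroup f) (φ : A → A) :
    TernaryAssoc (fun a b c => f a (φ b) c) ↔
      ∀ b c d, φ (f b (φ c) d) = f (φ b) c (φ d) := by
  obtain ⟨hA, hQ⟩ := hG
  have outer_eq_middle_iff (a b c d e : A) :
      f a (f (φ b) c (φ d)) e = f a (φ (f b (φ c) d)) e ↔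
        φ (f b (φ c) d) = f (φ b) c (φ d) :=
    hQ.middle_cancel_iff.trans eq_comm
  constructor
  · intro hP b c d
    have h : f (f b (φ b) c) (φ d) b = f b (φ (f b (φ c) d)) b := hP.left_eq_middle_s13 b b c d b
    rwa [hA.left_eq_middle_s13, outer_eq_middle_iff] at h
  · intro hφ a b c d e
    dsimp only
    rw [hφ, hA.left_eq_middle_s13, hA.middle_eq_right_s13]
    exact ⟨rfl, rfl⟩

end

/-- A ternary group is semi-commutative iff the derived operation
P(a,b,c) = [ab̄c] is associative. -/
theorem stmt13 (f : A → A → A → A) (hG : TernaryGroup f)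
    (sk : A → A) (hsk : IsSkew f sk) :
    SemiComm f ↔ TernaryAssoc (fun a b c => f a (sk b) c) := by
  have skew_twist (b c d : A) : sk (f b (sk c) d) = f (sk d) c (sk b) := by
    rw [hsk.skew_apply hG, hsk.involutive hG]
  rw [semiComm_iff_of_surjective (hsk.involutive hG).surjective, hG.assoc_middle_map_iff sk]
  exact forall₃_congr fun b c d => by rw [skew_twist, eq_comm]
end
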